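/- Second conditional Ingleton inequality [2cI]: let ξ_X, ξ_Y, ξ_Z, ξ_U be discrete random variables with nonempty finite ranges on a common probability space, and let h be the entropy function assigning to each subset S of {X, Y, Z, U} the Shannon entropy of the joint distribution of (ξ_i)_{i∈S}. If ξ_X ⊥ ξ_Y | ξ_Z and ξ_Y ⊥ ξ_U | ξ_Z, then □h(X,Y) ≥ 0. -/

import Mathlib

open MeasureTheory

/-- The probability that the discrete random variable `f` takes the value `x`. -/
noncomputable def probOf {Ω S : Type*} [MeasurableSpace Ω] (μ : Measure Ω)
    (f : Ω → S) (x : S) : ℝ :=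
  (μ {ω | f ω = x}).toReal

/-- The Shannon entropy `−Σ_x p(x)·ln p(x)` of the distribution of a discrete
random variable `f` with finite range `S`. -/
noncomputable def entropyOf {Ω S : Type*} [MeasurableSpace Ω] [Fintype S]
    (μ : Measure Ω) (f : Ω → S) : ℝ :=
  ∑ x : S, Real.negMulLog (probOf μ f x)

/-- Conditional independence of discrete random variables:
`P(f = a, g = b, k = c) · P(k = c) = P(f = a, k = c) · P(g = b, k = c)` for all values. -/
def CondIndepRV {Ω A B C : Type*} [MeasurableSpace Ω] (μ : Measure Ω)
    (f : Ω → A) (g : Ω → B) (k : Ω → C) : Prop :=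
  ∀ (a : A) (b : B) (c : C),
    μ {ω | f ω = a ∧ g ω = b ∧ k ω = c} * μ {ω | k ω = c} =
    μ {ω | f ω = a ∧ k ω = c} * μ {ω | g ω = b ∧ k ω = c}

/-- Unconditional independence: the case of a constant conditioning variable. -/
def IndepRV {Ω A B : Type*} [MeasurableSpace Ω] (μ : Measure Ω)
    (f : Ω → A) (g : Ω → B) : Prop :=
  CondIndepRV μ f g (fun _ => ())

/-- The Ingleton expression □h(X,Y) for the entropy function `h` of the four
discrete random variables `ξX, ξY, ξZ, ξU` (entropies of joint sub-vectors). -/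
noncomputable def ingletonEnt {Ω SX SY SZ SU : Type*} [MeasurableSpace Ω]
    [Fintype SX] [Fintype SY] [Fintype SZ] [Fintype SU] (μ : Measure Ω)
    (ξX : Ω → SX) (ξY : Ω → SY) (ξZ : Ω → SZ) (ξU : Ω → SU) : ℝ :=
  - entropyOf μ (fun ω => (ξX ω, ξY ω)) + entropyOf μ (fun ω => (ξX ω, ξZ ω))
  + entropyOf μ (fun ω => (ξX ω, ξU ω)) + entropyOf μ (fun ω => (ξY ω, ξZ ω))
  + entropyOf μ (fun ω => (ξY ω, ξU ω)) + entropyOf μ (fun ω => (ξZ ω, ξU ω))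
  - entropyOf μ ξZ - entropyOf μ ξU
  - entropyOf μ (fun ω => (ξX ω, ξZ ω, ξU ω)) - entropyOf μ (fun ω => (ξY ω, ξZ ω, ξU ω))


/-!
Write `I(f; g | k)` for the conditional mutual information. The Shannon identity
`□h(X,Y) = I(X;Y|Z) + I(Y;U|Z) + I(X;Y|U) + I(Z;U|XY) − I(XU;Y|Z)` shows that `□h(X,Y) ≥ 0` as soon
as `Y` is conditionally independent of the pair `(X, U)` given `Z`. The two hypotheses are weaker,
but `□h(X,Y)` depends only on the laws of `(X, Y)`, `(X, Z, U)` and `(Y, Z, U)`, and they allow `Y`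
to be replaced by a fresh copy drawn from its conditional distribution given `Z`: the copy is
conditionally independent of `(X, U)`, and since a conditionally independent triple is determined
by its laws of pairs, the laws of `(X, Y, Z)` and `(U, Y, Z)` do not change.
-/

open ProbabilityTheory

theorem sum_mul_log_le_sum_mul_log {ι : Type*} {s : Finset ι} {p w : ι → ℝ}
    (hp : ∀ i ∈ s, 0 ≤ p i) (hw : ∀ i ∈ s, 0 ≤ w i) (hpw : ∀ i ∈ s, w i = 0 → p i = 0)
    (hsum : ∑ i ∈ s, w i ≤ ∑ i ∈ s, p i) :
    ∑ i ∈ s, p i * Real.log (w i) ≤ ∑ i ∈ s, p i * Real.log (p i) := by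
  have hterm : ∀ i ∈ s, p i * Real.log (w i) ≤ p i * Real.log (p i) + (w i - p i) := by
    intro i hi
    rcases (hp i hi).eq_or_lt with hpi | hpi
    · simpa [← hpi] using hw i hi
    · have hwi : 0 < w i := (hw i hi).lt_of_ne' fun h => hpi.ne' (hpw i hi h)
      have hlog := Real.log_le_sub_one_of_pos (div_pos hwi hpi)
      rw [Real.log_div hwi.ne' hpi.ne', ← mul_le_mul_iff_right₀ hpi, mul_sub, mul_sub,
        mul_div_cancel₀ _ hpi.ne'] at hlog
      linarith
  calc ∑ i ∈ s, p i * Real.log (w i)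
      ≤ ∑ i ∈ s, (p i * Real.log (p i) + (w i - p i)) := Finset.sum_le_sum hterm
    _ = ∑ i ∈ s, p i * Real.log (p i) + (∑ i ∈ s, w i - ∑ i ∈ s, p i) := by
      rw [Finset.sum_add_distrib, Finset.sum_sub_distrib]
    _ ≤ ∑ i ∈ s, p i * Real.log (p i) := by linarith

section Probability

variable {Ω A B C : Type*} [MeasurableSpace Ω] {μ : Measure Ω}

theorem probOf_nonneg (f : Ω → A) (a : A) : 0 ≤ probOf μ f a :=
  ENNReal.toReal_nonneg

theorem probOf_le_probOf_comp [IsFiniteMeasure μ] (f : Ω → A) (g : A → B) (a : A) :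
    probOf μ f a ≤ probOf μ (fun ω => g (f ω)) (g a) :=
  measureReal_mono fun _ hω => congrArg g hω

theorem probOf_comp_of_injective (f : Ω → A) {g : A → B} (hg : Function.Injective g) (a : A) :
    probOf μ (fun ω => g (f ω)) (g a) = probOf μ f a := by
  simp only [probOf, hg.eq_iff]

theorem sum_probOf_fiber [IsFiniteMeasure μ] [Fintype A] [MeasurableSpace A]
    [MeasurableSingletonClass A] [DecidableEq B] {f : Ω → A} (hf : Measurable f) (g : A → B)
    (b : B) : ∑ a with g a = b, probOf μ f a = probOf μ (fun ω => g (f ω)) b := by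
  refine (sum_measureReal_preimage_singleton _ fun a _ => hf (measurableSet_singleton a)).trans ?_
  congr 1
  ext ω
  simp

theorem sum_probOf_mul_comp [IsFiniteMeasure μ] [Fintype A] [MeasurableSpace A]
    [MeasurableSingletonClass A] [Fintype B] {f : Ω → A} (hf : Measurable f) (g : A → B)
    (φ : B → ℝ) :
    ∑ a, probOf μ f a * φ (g a) = ∑ b, probOf μ (fun ω => g (f ω)) b * φ b := by
  classical
  simp_rw [← sum_probOf_fiber hf g, Finset.sum_mul, Finset.sum_filter]
  rw [Finset.sum_comm]
  simp

theorem sum_probOf_prodMk_left [IsFiniteMeasure μ] [Fintype A] [MeasurableSpace A]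
    [MeasurableSingletonClass A] {f : Ω → A} (hf : Measurable f) (g : Ω → B) (b : B) :
    ∑ a, probOf μ (fun ω => (f ω, g ω)) (a, b) = probOf μ g b := by
  have hset (a : A) : {ω | (f ω, g ω) = (a, b)} = f ⁻¹' {a} ∩ {ω | g ω = b} := by
    ext ω
    simp
  have h := sum_measureReal_preimage_singleton (μ := μ.restrict {ω | g ω = b}) Finset.univ
    (f := f) fun a _ => hf (measurableSet_singleton a)
  simpa only [measureReal_restrict_apply (hf (measurableSet_singleton _)), Finset.coe_univ,
    Set.preimage_univ, Measure.restrict_apply_univ, measureReal_def, probOf, hset] using h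

theorem entropyOf_comp_of_injective [Fintype A] [Fintype B] (f : Ω → A) {g : A → B}
    (hg : Function.Injective g) : entropyOf μ (fun ω => g (f ω)) = entropyOf μ f := by
  refine (Fintype.sum_of_injective g hg _ _ (fun b hb => ?_) fun a => ?_).symm
  · have hempty : {ω | g (f ω) = b} = ∅ :=
      Set.eq_empty_of_forall_notMem fun ω hω => hb ⟨f ω, hω⟩
    simp [probOf, hempty]
  · rw [probOf_comp_of_injective f hg]

theorem entropyOf_comp [IsFiniteMeasure μ] [Fintype A] [MeasurableSpace A]
    [MeasurableSingletonClass A] [Fintype B] {f : Ω → A} (hf : Measurable f) (g : A → B) :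
    entropyOf μ (fun ω => g (f ω)) =
      -∑ a, probOf μ f a * Real.log (probOf μ (fun ω => g (f ω)) (g a)) := by
  rw [sum_probOf_mul_comp hf g fun b => Real.log (probOf μ (fun ω => g (f ω)) b),
    ← Finset.sum_neg_distrib]
  simp only [entropyOf, Real.negMulLog, neg_mul]

end Probability

section CondMutualInfo

variable {Ω A B C : Type*} [MeasurableSpace Ω] {μ : Measure Ω} {f : Ω → A} {g : Ω → B} {k : Ω → C}

/-- The mass function `P(f = a, k = c) · P(g = b, k = c) / P(k = c)` of the joint distribution with
the same laws of `(f, k)` and `(g, k)` as `μ` under which `f` and `g` are conditionally independent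
given `k`. Where `P(k = c) = 0` the division by zero yields the intended value `0`. -/
noncomputable def condIndepProb (μ : Measure Ω) (f : Ω → A) (g : Ω → B) (k : Ω → C)
    (t : A × B × C) : ℝ :=
  probOf μ (fun ω => (f ω, k ω)) (t.1, t.2.2) * probOf μ (fun ω => (g ω, k ω)) t.2 /
    probOf μ k t.2.2

theorem condIndepProb_nonneg (t : A × B × C) : 0 ≤ condIndepProb μ f g k t :=
  div_nonneg (mul_nonneg (probOf_nonneg _ _) (probOf_nonneg _ _)) (probOf_nonneg _ _)

theorem probOf_eq_zero_of_condIndepProb_eq_zero [IsFiniteMeasure μ] {t : A × B × C}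
    (ht : condIndepProb μ f g k t = 0) : probOf μ (fun ω => (f ω, g ω, k ω)) t = 0 := by
  have hfk := probOf_le_probOf_comp (μ := μ) (fun ω => (f ω, g ω, k ω)) (fun t => (t.1, t.2.2)) t
  have hgk := probOf_le_probOf_comp (μ := μ) (fun ω => (f ω, g ω, k ω)) (fun t => t.2) t
  have hk := probOf_le_probOf_comp (μ := μ) (fun ω => (f ω, g ω, k ω)) (fun t => t.2.2) t
  contrapose! ht
  have hpos := (probOf_nonneg (μ := μ) _ _).lt_of_ne' ht
  exact (div_pos (mul_pos (hpos.trans_le hfk) (hpos.trans_le hgk)) (hpos.trans_le hk)).ne'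

theorem sum_condIndepProb [IsFiniteMeasure μ] [Fintype A] [MeasurableSpace A]
    [MeasurableSingletonClass A] [Fintype B] [MeasurableSpace B] [MeasurableSingletonClass B]
    [Fintype C] (hf : Measurable f) (hg : Measurable g) :
    ∑ t, condIndepProb μ f g k t = ∑ t, probOf μ (fun ω => (f ω, g ω, k ω)) t := by
  simp only [Fintype.sum_prod_type_right, condIndepProb, ← Finset.sum_div, ← Finset.sum_mul,
    ← Finset.mul_sum, sum_probOf_prodMk_left hf, sum_probOf_prodMk_left hg, mul_self_div_self]

theorem CondIndepRV.symm (h : CondIndepRV μ f g k) : CondIndepRV μ g f k := fun b a c => by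
  simpa only [and_left_comm, mul_comm] using h a b c

theorem CondIndepRV.probOf_eq_condIndepProb [IsFiniteMeasure μ] (h : CondIndepRV μ f g k)
    (t : A × B × C) : probOf μ (fun ω => (f ω, g ω, k ω)) t = condIndepProb μ f g k t := by
  obtain ⟨a, b, c⟩ := t
  by_cases hc : probOf μ k c = 0
  · have hle := probOf_le_probOf_comp (μ := μ) (fun ω => (f ω, g ω, k ω)) (fun t => t.2.2) (a, b, c)
    rw [condIndepProb, hc, div_zero]
    exact le_antisymm (hle.trans_eq hc) (probOf_nonneg _ _)
  · refine eq_div_of_mul_eq hc ?_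
    simpa only [probOf, Prod.mk.injEq, ENNReal.toReal_mul] using congrArg ENNReal.toReal (h a b c)

/-- The conditional mutual information `I(f; g | k)`. -/
noncomputable def condMutualInfo [Fintype A] [Fintype B] [Fintype C] (μ : Measure Ω)
    (f : Ω → A) (g : Ω → B) (k : Ω → C) : ℝ :=
  entropyOf μ (fun ω => (f ω, k ω)) + entropyOf μ (fun ω => (g ω, k ω)) -
    entropyOf μ (fun ω => (f ω, g ω, k ω)) - entropyOf μ k

variable [IsFiniteMeasure μ]
  [Fintype A] [MeasurableSpace A] [MeasurableSingletonClass A]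
  [Fintype B] [MeasurableSpace B] [MeasurableSingletonClass B]
  [Fintype C] [MeasurableSpace C] [MeasurableSingletonClass C]

theorem condMutualInfo_eq_sum_sub_sum (hf : Measurable f) (hg : Measurable g) (hk : Measurable k) :
    condMutualInfo μ f g k =
      ∑ t, probOf μ (fun ω => (f ω, g ω, k ω)) t *
        Real.log (probOf μ (fun ω => (f ω, g ω, k ω)) t) -
      ∑ t, probOf μ (fun ω => (f ω, g ω, k ω)) t * Real.log (condIndepProb μ f g k t) := by
  have hfgk := hf.prodMk (hg.prodMk hk)
  rw [condMutualInfo, entropyOf_comp hfgk fun t => (t.1, t.2.2), entropyOf_comp hfgk Prod.snd,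
    entropyOf_comp hfgk fun t => t.2.2, entropyOf_comp hfgk fun t => t]
  simp only [← Finset.sum_neg_distrib, ← Finset.sum_add_distrib, ← Finset.sum_sub_distrib]
  refine Finset.sum_congr rfl fun t _ => ?_
  by_cases ht : probOf μ (fun ω => (f ω, g ω, k ω)) t = 0
  · simp [ht]
  have hw := mt probOf_eq_zero_of_condIndepProb_eq_zero ht
  rw [condIndepProb] at hw ⊢
  obtain ⟨hnum, hk0⟩ := div_ne_zero_iff.1 hw
  obtain ⟨hfk0, hgk0⟩ := mul_ne_zero_iff.1 hnum
  rw [Real.log_div hnum hk0, Real.log_mul hfk0 hgk0]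
  ring

theorem condMutualInfo_nonneg (hf : Measurable f) (hg : Measurable g) (hk : Measurable k) :
    0 ≤ condMutualInfo μ f g k := by
  rw [condMutualInfo_eq_sum_sub_sum hf hg hk, sub_nonneg]
  exact sum_mul_log_le_sum_mul_log (fun _ _ => probOf_nonneg _ _)
    (fun _ _ => condIndepProb_nonneg _) (fun _ _ => probOf_eq_zero_of_condIndepProb_eq_zero)
    (sum_condIndepProb hf hg).le

theorem CondIndepRV.condMutualInfo_eq_zero (hf : Measurable f) (hg : Measurable g)
    (hk : Measurable k) (h : CondIndepRV μ f g k) : condMutualInfo μ f g k = 0 := by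
  simp only [condMutualInfo_eq_sum_sub_sum hf hg hk, h.probOf_eq_condIndepProb, sub_self]

end CondMutualInfo

section IdentDistrib

variable {Ω Ω' A B C : Type*} [MeasurableSpace Ω] [MeasurableSpace Ω'] {μ : Measure Ω}
  {ν : Measure Ω'}

theorem probOf_eq_of_identDistrib [MeasurableSpace A] [MeasurableSingletonClass A] {f : Ω → A}
    {f' : Ω' → A} (h : IdentDistrib f f' μ ν) (a : A) : probOf μ f a = probOf ν f' a :=
  congrArg ENNReal.toReal (h.measure_mem_eq (measurableSet_singleton a))

theorem entropyOf_eq_of_identDistrib [Fintype A] [MeasurableSpace A] [MeasurableSingletonClass A]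
    {f : Ω → A} {f' : Ω' → A} (h : IdentDistrib f f' μ ν) : entropyOf μ f = entropyOf ν f' := by
  simp only [entropyOf, probOf_eq_of_identDistrib h]

theorem entropyOf_comp_eq_of_identDistrib [MeasurableSpace A] [Fintype B] [MeasurableSpace B]
    [MeasurableSingletonClass B] {f : Ω → A} {f' : Ω' → A} (h : IdentDistrib f f' μ ν) {g : A → B}
    (hg : Measurable g) : entropyOf μ (fun ω => g (f ω)) = entropyOf ν (fun ω => g (f' ω)) :=
  entropyOf_eq_of_identDistrib (h.comp hg)

theorem identDistrib_of_probOf_eq [IsFiniteMeasure μ] [IsFiniteMeasure ν] [Countable A]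
    [MeasurableSpace A] [MeasurableSingletonClass A] {f : Ω → A} {f' : Ω' → A}
    (hf : AEMeasurable f μ) (hf' : AEMeasurable f' ν) (h : ∀ a, probOf μ f a = probOf ν f' a) :
    IdentDistrib f f' μ ν where
  aemeasurable_fst := hf
  aemeasurable_snd := hf'
  map_eq := Measure.ext_of_measureReal_singleton fun a => by
    simp only [measureReal_def, Measure.map_apply_of_aemeasurable hf (measurableSet_singleton a),
      Measure.map_apply_of_aemeasurable hf' (measurableSet_singleton a)]
    exact h a

theorem CondIndepRV.identDistrib [IsFiniteMeasure μ] [IsFiniteMeasure ν]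
    [Countable A] [MeasurableSpace A] [MeasurableSingletonClass A]
    [Countable B] [MeasurableSpace B] [MeasurableSingletonClass B]
    [Countable C] [MeasurableSpace C] [MeasurableSingletonClass C]
    {f : Ω → A} {g : Ω → B} {k : Ω → C} {f' : Ω' → A} {g' : Ω' → B} {k' : Ω' → C}
    (h : CondIndepRV μ f g k) (h' : CondIndepRV ν f' g' k')
    (hfk : IdentDistrib (fun ω => (f ω, k ω)) (fun ω => (f' ω, k' ω)) μ ν)
    (hgk : IdentDistrib (fun ω => (g ω, k ω)) (fun ω => (g' ω, k' ω)) μ ν) :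
    IdentDistrib (fun ω => (f ω, g ω, k ω)) (fun ω => (f' ω, g' ω, k' ω)) μ ν := by
  refine identDistrib_of_probOf_eq (hfk.aemeasurable_fst.fst.prodMk hgk.aemeasurable_fst)
    (hfk.aemeasurable_snd.fst.prodMk hgk.aemeasurable_snd) fun t => ?_
  have hk := hfk.comp measurable_snd
  rw [h.probOf_eq_condIndepProb, h'.probOf_eq_condIndepProb, condIndepProb, condIndepProb,
    probOf_eq_of_identDistrib hfk, probOf_eq_of_identDistrib hgk]
  congr 1
  exact probOf_eq_of_identDistrib hk _

end IdentDistrib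

section Resample

variable {Ω A B C : Type*} [MeasurableSpace Ω] [MeasurableSpace A] [MeasurableSpace B]
  [StandardBorelSpace B] [Nonempty B] [MeasurableSpace C]
  (μ : Measure Ω) [IsFiniteMeasure μ] (g : Ω → B) {k : Ω → C} (hk : Measurable k)

/-- The law of a point `ω` drawn from `μ` together with a fresh copy of `g`, drawn from the
conditional distribution of `g` given `k ω` and otherwise independently of `ω`. -/
noncomputable def resample : Measure (Ω × B) :=
  μ ⊗ₘ (condDistrib g k μ).comap k hk

instance : IsFiniteMeasure (resample μ g hk) := by
  unfold resample
  infer_instance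

theorem identDistrib_comp_fst_resample {f : Ω → A} (hf : Measurable f) :
    IdentDistrib f (fun p => f p.1) μ (resample μ g hk) where
  aemeasurable_fst := hf.aemeasurable
  aemeasurable_snd := (hf.comp measurable_fst).aemeasurable
  map_eq := by
    rw [← Function.comp_def f, ← Measure.map_map hf measurable_fst]
    exact congrArg (Measure.map f) (Measure.fst_compProd _ _).symm

variable {g} in
theorem identDistrib_snd_resample (hg : Measurable g) :
    IdentDistrib (fun ω => (g ω, k ω)) (fun p => (p.2, k p.1)) μ (resample μ g hk) where
  aemeasurable_fst := (hg.prodMk hk).aemeasurable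
  aemeasurable_snd := (measurable_snd.prodMk (hk.comp measurable_fst)).aemeasurable
  map_eq := by
    refine Measure.ext_prod fun {s t} hs ht => ?_
    have hpre : (fun p : Ω × B => (p.2, k p.1)) ⁻¹' s ×ˢ t = (k ⁻¹' t) ×ˢ s := by
      ext p
      simp [and_comm]
    rw [Measure.map_apply (hg.prodMk hk) (hs.prod ht), Measure.map_apply (by fun_prop) (hs.prod ht),
      hpre, resample, Measure.compProd_apply_prod (hk ht) hs]
    simp only [Kernel.comap_apply]
    rw [setLIntegral_preimage_condDistrib hk hg.aemeasurable hs ht, Set.inter_comm,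
      Set.mk_preimage_prod]

theorem resample_prod {s : Set Ω} {t : Set B} {c : C} (hs : MeasurableSet s) (ht : MeasurableSet t)
    (hsc : ∀ ω ∈ s, k ω = c) : resample μ g hk (s ×ˢ t) = μ s * condDistrib g k μ c t := by
  rw [resample, Measure.compProd_apply_prod hs ht,
    setLIntegral_congr_fun (g := fun _ => condDistrib g k μ c t) hs fun ω hω => by
      rw [Kernel.comap_apply, hsc ω hω],
    setLIntegral_const, mul_comm]

theorem condIndepRV_resample [MeasurableSingletonClass A] [MeasurableSingletonClass C]
    {f : Ω → A} (hf : Measurable f) :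
    CondIndepRV (resample μ g hk) (fun p => f p.1) Prod.snd (fun p => k p.1) := by
  intro a b c
  have hk' : MeasurableSet {ω | k ω = c} := hk (measurableSet_singleton c)
  have hfk : MeasurableSet {ω | f ω = a ∧ k ω = c} := (hf (measurableSet_singleton a)).inter hk'
  have h_fgk : {p : Ω × B | f p.1 = a ∧ p.2 = b ∧ k p.1 = c} =
      {ω | f ω = a ∧ k ω = c} ×ˢ {b} := by
    ext p
    simp only [Set.mem_prod, Set.mem_ofPred_eq, Set.mem_singleton_iff]
    tauto
  have h_fk : {p : Ω × B | f p.1 = a ∧ k p.1 = c} = {ω | f ω = a ∧ k ω = c} ×ˢ Set.univ := by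
    rw [Set.prod_univ]
    rfl
  have h_gk : {p : Ω × B | p.2 = b ∧ k p.1 = c} = {ω | k ω = c} ×ˢ {b} := by
    ext p
    exact and_comm
  have h_k : {p : Ω × B | k p.1 = c} = {ω | k ω = c} ×ˢ Set.univ := by
    rw [Set.prod_univ]
    rfl
  rw [h_fgk, h_fk, h_gk, h_k, resample_prod μ g hk hfk (measurableSet_singleton b) fun _ h => h.2,
    resample_prod μ g hk hfk .univ fun _ h => h.2,
    resample_prod μ g hk hk' (measurableSet_singleton b) fun _ h => h,
    resample_prod μ g hk hk' .univ fun _ h => h, measure_univ]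
  ring

end Resample

section Ingleton

variable {Ω SX SY SZ SU : Type*} [MeasurableSpace Ω] {μ : Measure Ω}
  [Fintype SX] [Fintype SY] [Fintype SZ] [Fintype SU]

theorem ingletonEnt_eq_condMutualInfo (ξX : Ω → SX) (ξY : Ω → SY) (ξZ : Ω → SZ) (ξU : Ω → SU) :
    ingletonEnt μ ξX ξY ξZ ξU =
      condMutualInfo μ ξX ξY ξZ + condMutualInfo μ ξY ξU ξZ + condMutualInfo μ ξX ξY ξU +
        condMutualInfo μ ξZ ξU (fun ω => (ξX ω, ξY ω)) -
        condMutualInfo μ (fun ω => (ξX ω, ξU ω)) ξY ξZ := by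
  have hUZ : entropyOf μ (fun ω => (ξU ω, ξZ ω)) = entropyOf μ (fun ω => (ξZ ω, ξU ω)) :=
    entropyOf_comp_of_injective (fun ω => (ξZ ω, ξU ω)) Prod.swap_injective
  have hYUZ : entropyOf μ (fun ω => (ξY ω, ξU ω, ξZ ω)) =
      entropyOf μ (fun ω => (ξY ω, ξZ ω, ξU ω)) :=
    entropyOf_comp_of_injective (fun ω => (ξY ω, ξZ ω, ξU ω))
      (g := fun t => (t.1, t.2.2, t.2.1)) fun s t h => by grind
  have hZXY : entropyOf μ (fun ω => (ξZ ω, ξX ω, ξY ω)) =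
      entropyOf μ (fun ω => (ξX ω, ξY ω, ξZ ω)) :=
    entropyOf_comp_of_injective (fun ω => (ξX ω, ξY ω, ξZ ω))
      (g := fun t => (t.2.2, t.1, t.2.1)) fun s t h => by grind
  have hUXY : entropyOf μ (fun ω => (ξU ω, ξX ω, ξY ω)) =
      entropyOf μ (fun ω => (ξX ω, ξY ω, ξU ω)) :=
    entropyOf_comp_of_injective (fun ω => (ξX ω, ξY ω, ξU ω))
      (g := fun t => (t.2.2, t.1, t.2.1)) fun s t h => by grind
  have hXU_Z : entropyOf μ (fun ω => ((ξX ω, ξU ω), ξZ ω)) =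
      entropyOf μ (fun ω => (ξX ω, ξZ ω, ξU ω)) :=
    entropyOf_comp_of_injective (fun ω => (ξX ω, ξZ ω, ξU ω))
      (g := fun t => ((t.1, t.2.2), t.2.1)) fun s t h => by grind
  have hXU_YZ : entropyOf μ (fun ω => ((ξX ω, ξU ω), ξY ω, ξZ ω)) =
      entropyOf μ (fun ω => (ξZ ω, ξU ω, ξX ω, ξY ω)) :=
    entropyOf_comp_of_injective (fun ω => (ξZ ω, ξU ω, ξX ω, ξY ω))
      (g := fun t => ((t.2.2.1, t.2.1), t.2.2.2, t.1)) fun s t h => by grind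
  simp only [ingletonEnt, condMutualInfo, hUZ, hYUZ, hZXY, hUXY, hXU_Z, hXU_YZ]
  ring

variable [MeasurableSpace SX] [MeasurableSingletonClass SX]
  [MeasurableSpace SY] [MeasurableSingletonClass SY]
  [MeasurableSpace SZ] [MeasurableSingletonClass SZ]
  [MeasurableSpace SU] [MeasurableSingletonClass SU]
  {ξX : Ω → SX} {ξY : Ω → SY} {ξZ : Ω → SZ} {ξU : Ω → SU}

theorem ingletonEnt_nonneg_of_condIndepRV_prodMk [IsFiniteMeasure μ]
    (mX : Measurable ξX) (mY : Measurable ξY) (mZ : Measurable ξZ) (mU : Measurable ξU)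
    (h : CondIndepRV μ (fun ω => (ξX ω, ξU ω)) ξY ξZ) : 0 ≤ ingletonEnt μ ξX ξY ξZ ξU := by
  rw [ingletonEnt_eq_condMutualInfo, h.condMutualInfo_eq_zero (mX.prodMk mU) mY mZ, sub_zero]
  have hXY_Z := condMutualInfo_nonneg (μ := μ) mX mY mZ
  have hYU_Z := condMutualInfo_nonneg (μ := μ) mY mU mZ
  have hXY_U := condMutualInfo_nonneg (μ := μ) mX mY mU
  have hZU_XY := condMutualInfo_nonneg (μ := μ) mZ mU (mX.prodMk mY)
  positivity

theorem ingletonEnt_eq_of_identDistrib {Ω' : Type*} [MeasurableSpace Ω'] {ν : Measure Ω'}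
    {ηX : Ω' → SX} {ηY : Ω' → SY} {ηZ : Ω' → SZ} {ηU : Ω' → SU}
    (hXY : IdentDistrib (fun ω => (ξX ω, ξY ω)) (fun ω => (ηX ω, ηY ω)) μ ν)
    (hXZU : IdentDistrib (fun ω => (ξX ω, ξZ ω, ξU ω)) (fun ω => (ηX ω, ηZ ω, ηU ω)) μ ν)
    (hYZU : IdentDistrib (fun ω => (ξY ω, ξZ ω, ξU ω)) (fun ω => (ηY ω, ηZ ω, ηU ω)) μ ν) :
    ingletonEnt μ ξX ξY ξZ ξU = ingletonEnt ν ηX ηY ηZ ηU := by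
  rw [ingletonEnt, ingletonEnt, entropyOf_eq_of_identDistrib hXY,
    entropyOf_eq_of_identDistrib hXZU, entropyOf_eq_of_identDistrib hYZU,
    entropyOf_comp_eq_of_identDistrib hXZU (measurable_fst.prodMk measurable_snd.fst),
    entropyOf_comp_eq_of_identDistrib hXZU (measurable_fst.prodMk measurable_snd.snd),
    entropyOf_comp_eq_of_identDistrib hYZU (measurable_fst.prodMk measurable_snd.fst),
    entropyOf_comp_eq_of_identDistrib hYZU (measurable_fst.prodMk measurable_snd.snd),
    entropyOf_comp_eq_of_identDistrib hXZU measurable_snd,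
    entropyOf_comp_eq_of_identDistrib hXZU measurable_snd.fst,
    entropyOf_comp_eq_of_identDistrib hXZU measurable_snd.snd]

end Ingleton

theorem conditional_ingleton_2cI_general
    {Ω : Type*} [MeasurableSpace Ω] (μ : Measure Ω) [IsFiniteMeasure μ]
    {SX SY SZ SU : Type*}
    [Fintype SX] [MeasurableSpace SX] [MeasurableSingletonClass SX]
    [Fintype SY] [Nonempty SY] [MeasurableSpace SY] [MeasurableSingletonClass SY]
    [Fintype SZ] [MeasurableSpace SZ] [MeasurableSingletonClass SZ]
    [Fintype SU] [MeasurableSpace SU] [MeasurableSingletonClass SU]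
    (ξX : Ω → SX) (ξY : Ω → SY) (ξZ : Ω → SZ) (ξU : Ω → SU)
    (mX : Measurable ξX) (mY : Measurable ξY) (mZ : Measurable ξZ) (mU : Measurable ξU)
    (h1 : CondIndepRV μ ξX ξY ξZ) (h2 : CondIndepRV μ ξY ξU ξZ) :
    0 ≤ ingletonEnt μ ξX ξY ξZ ξU := by
  have hYZ := identDistrib_snd_resample μ mZ mY
  have hXYZ := h1.identDistrib (condIndepRV_resample μ ξY mZ mX)
    (identDistrib_comp_fst_resample μ ξY mZ (mX.prodMk mZ)) hYZ
  have hUYZ := h2.symm.identDistrib (condIndepRV_resample μ ξY mZ mU)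
    (identDistrib_comp_fst_resample μ ξY mZ (mU.prodMk mZ)) hYZ
  have hXZU := identDistrib_comp_fst_resample μ ξY mZ (mX.prodMk (mZ.prodMk mU))
  have hXY : IdentDistrib (fun ω => (ξX ω, ξY ω)) (fun p => (ξX p.1, p.2)) μ
      (resample μ ξY mZ) := hXYZ.comp (measurable_fst.prodMk measurable_snd.fst)
  have hYZU : IdentDistrib (fun ω => (ξY ω, ξZ ω, ξU ω)) (fun p => (p.2, ξZ p.1, ξU p.1)) μ
      (resample μ ξY mZ) :=
    hUYZ.comp (measurable_snd.fst.prodMk (measurable_snd.snd.prodMk measurable_fst))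
  rw [ingletonEnt_eq_of_identDistrib hXY hXZU hYZU]
  exact ingletonEnt_nonneg_of_condIndepRV_prodMk (mX.comp measurable_fst) measurable_snd
    (mZ.comp measurable_fst) (mU.comp measurable_fst)
    (condIndepRV_resample μ ξY mZ (mX.prodMk mU))

/-- Statement: the second conditional Ingleton inequality. -/
theorem conditional_ingleton_2cI
    {Ω : Type*} [MeasurableSpace Ω] (μ : Measure Ω) [IsProbabilityMeasure μ]
    {SX SY SZ SU : Type*}
    [Fintype SX] [Nonempty SX] [MeasurableSpace SX] [MeasurableSingletonClass SX]
    [Fintype SY] [Nonempty SY] [MeasurableSpace SY] [MeasurableSingletonClass SY]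
    [Fintype SZ] [Nonempty SZ] [MeasurableSpace SZ] [MeasurableSingletonClass SZ]
    [Fintype SU] [Nonempty SU] [MeasurableSpace SU] [MeasurableSingletonClass SU]
    (ξX : Ω → SX) (ξY : Ω → SY) (ξZ : Ω → SZ) (ξU : Ω → SU)
    (mX : Measurable ξX) (mY : Measurable ξY) (mZ : Measurable ξZ) (mU : Measurable ξU)
    (h1 : CondIndepRV μ ξX ξY ξZ) (h2 : CondIndepRV μ ξY ξU ξZ) :
    0 ≤ ingletonEnt μ ξX ξY ξZ ξU :=
  conditional_ingleton_2cI_general μ ξX ξY ξZ ξU mX mY mZ mU h1 h2
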